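/- arXiv:1510.07583 — 6 statements merged into one kernel-verified Lean document; each statement's English description precedes it below -/
import Mathlib

section
/- Let G be a group such that G = KX, where K is a normal subgroup of G and X is a subgroup of G, and regard K as an X-group via conjugation. Then: (i) G is nilpotent if and only if X is nilpotent and X acts nilpotently on K, in which case the nilpotency class of G equals max{nil X, nil_X K}; (ii) G is solvable if and only if X and K are solvable, in which case the derived length of G equals max{der(X), der_X(K)}. -/
open scoped Pointwise

/-- The lower `G`-central series of a `G`-group `K` (action given by `φ : G →* MulAut K`):
`lowerGCentralSeries φ i = γ^G_{i+1} K`, with `γ^G_1 K = K` and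
`γ^G_{i+1} K = ⟨ k (g·l) k⁻¹ l⁻¹ : k ∈ K, l ∈ γ^G_i K, g ∈ G ⟩`. -/
def lowerGCentralSeries {G K : Type*} [Group G] [Group K] (φ : G →* MulAut K) :
    ℕ → Subgroup K
  | 0 => ⊤
  | (i + 1) => Subgroup.closure
      {x | ∃ (k l : K) (g : G), l ∈ lowerGCentralSeries φ i ∧ x = k * (φ g l) * k⁻¹ * l⁻¹}

/-- The `G`-derived series of a `G`-group `K`: `δ^G_0 K = K` and
`δ^G_{i+1} K = γ^{G^{(i)}}_2 (δ^G_i K)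
            = ⟨ k (g·l) k⁻¹ l⁻¹ : k, l ∈ δ^G_i K, g ∈ G^{(i)} ⟩`. -/
def gDerivedSeries {G K : Type*} [Group G] [Group K] (φ : G →* MulAut K) :
    ℕ → Subgroup K
  | 0 => ⊤
  | (i + 1) => Subgroup.closure
      {x | ∃ k l : K, k ∈ gDerivedSeries φ i ∧ l ∈ gDerivedSeries φ i ∧
        ∃ g ∈ derivedSeries G i, x = k * (φ g l) * k⁻¹ * l⁻¹}

/-- The action is nilpotent: some term of the lower `G`-central series is trivial. -/
def ActsNilpotently {G K : Type*} [Group G] [Group K] (φ : G →* MulAut K) : Prop :=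
  ∃ c, lowerGCentralSeries φ c = ⊥

/-- The nilpotency class `nil_G K` of a nilpotent action. -/
noncomputable def actionNilClass {G K : Type*} [Group G] [Group K] (φ : G →* MulAut K) : ℕ :=
  sInf {c | lowerGCentralSeries φ c = ⊥}

/-- The action is solvable: some term of the `G`-derived series is trivial. -/
def ActsSolvably {G K : Type*} [Group G] [Group K] (φ : G →* MulAut K) : Prop :=
  ∃ d, gDerivedSeries φ d = ⊥

/-- The derived length `der_G(K)` of a solvable action. -/
noncomputable def actionDerLength {G K : Type*} [Group G] [Group K] (φ : G →* MulAut K) : ℕ :=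
  sInf {d | gDerivedSeries φ d = ⊥}

/-- The nilpotency class of a group (length of the upper central series). -/
noncomputable def nilClass (G : Type*) [Group G] : ℕ :=
  sInf {n | upperCentralSeries G n = ⊤}

/-- The derived length of a group (length of the derived series). -/
noncomputable def derLength (G : Type*) [Group G] : ℕ :=
  sInf {n | derivedSeries G n = ⊥}

theorem aux_three {G : Type*} [Group G] (A B C N : Subgroup G) [N.Normal]
    (h1 : ⁅⁅B, C⁆, A⁆ ≤ N) (h2 : ⁅⁅C, A⁆, B⁆ ≤ N) : ⁅⁅A, B⁆, C⁆ ≤ N := by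
  have key : ∀ H : Subgroup G, H ≤ N ↔ H.map (QuotientGroup.mk' N) = ⊥ := by
    intro H
    rw [Subgroup.map_eq_bot_iff, QuotientGroup.ker_mk']
  rw [key] at *
  simp only [Subgroup.map_commutator] at *
  exact Subgroup.commutator_commutator_eq_bot_of_rotate h1 h2

theorem aux_gamma {G : Type*} [Group G] (L : ℕ → Subgroup G) (hn : ∀ i, (L i).Normal)
    (hL : ∀ i, L (i + 1) = ⁅(⊤ : Subgroup G), L i⁆) (i : ℕ) :
    ∀ j, ⁅L j, (⊤ : Subgroup G).lowerCentralSeries i⁆ ≤ L (i + j + 1) := by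
  induction i with
  | zero =>
    intro j
    rw [hL, Subgroup.commutator_comm]
    simp
  | succ i ih =>
    intro j
    rw [Subgroup.lowerCentralSeries_succ, Subgroup.commutator_comm]
    have := hn (i + 1 + j + 1)
    apply aux_three
    · rw [← hL]
      have h := ih (j + 1)
      rwa [show i + (j + 1) + 1 = i + 1 + j + 1 by omega] at h
    · rw [show i + 1 + j + 1 = (i + j + 1) + 1 by omega, hL, Subgroup.commutator_comm]
      exact Subgroup.commutator_mono le_rfl (ih j)

open scoped commutatorElement in
theorem aux_comm {G : Type*} [Group G] (A B C D N : Subgroup G) [A.Normal] [C.Normal] [N.Normal]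
    (hBD : ⁅B, D⁆ ≤ D) (hDB : D ≤ B) (hAD : ⁅A, D⁆ ≤ N) (hAC : ⁅A ⊔ B, C⁆ ≤ N) :
    ⁅A ⊔ B, C ⊔ D⁆ ≤ N ⊔ ⁅B, D⁆ := by
  rw [Subgroup.commutator_le]
  intro g hg h hh
  obtain ⟨a, ha, b, hb, rfl⟩ := Subgroup.mem_sup_of_normal_left.1 hg
  obtain ⟨c, hc, d, hd, rfl⟩ := Subgroup.mem_sup_of_normal_left.1 hh
  have com : ∀ x y : G, ⁅x, y⁆ ∈ N → (x : G ⧸ N) * y = y * x := by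
    intro x y hxy
    rw [← commutatorElement_eq_one_iff_mul_comm]
    exact (QuotientGroup.eq_one_iff (N := N) _).2 hxy
  have hbd : ⁅b, d⁆ ∈ ⁅B, D⁆ := Subgroup.commutator_mem_commutator hb hd
  have e1 := com (a * b) c (hAC (Subgroup.commutator_mem_commutator hg hc))
  have e2 := com ⁅b, d⁆ c (hAC (Subgroup.commutator_mem_commutator
    (Subgroup.mem_sup_right (hDB (hBD hbd))) hc))
  have e3 := com a d (hAD (Subgroup.commutator_mem_commutator ha hd))
  have e4 := com a ⁅b, d⁆ (hAD (Subgroup.commutator_mem_commutator ha (hBD hbd)))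
  have key : ((⁅a * b, c * d⁆ : G) : G ⧸ N) = ((⁅b, d⁆ : G) : G ⧸ N) := by
    have f1 : ⁅a * b, c * d⁆ = ⁅a * b, c⁆ * (c * (a * ⁅b, d⁆ * a⁻¹ * ⁅a, d⁆) * c⁻¹) := by
      simp only [commutatorElement_def]; group
    have f2 : ((⁅a * b, c⁆ : G) : G ⧸ N) = 1 :=
      (QuotientGroup.eq_one_iff (N := N) _).2 (hAC (Subgroup.commutator_mem_commutator hg hc))
    have f3 : ((⁅a, d⁆ : G) : G ⧸ N) = 1 :=
      (QuotientGroup.eq_one_iff (N := N) _).2 (hAD (Subgroup.commutator_mem_commutator ha hd))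
    rw [f1]
    generalize ⁅b, d⁆ = u at *
    simp only [QuotientGroup.mk_mul, QuotientGroup.mk_inv, f2, f3, one_mul, mul_one]
    rw [e4, mul_inv_cancel_right, ← e2, mul_inv_cancel_right]
  have h5 : ⁅a * b, c * d⁆ / ⁅b, d⁆ ∈ N := by
    rw [← QuotientGroup.eq_one_iff (N := N)]
    rw [QuotientGroup.mk_div, key, div_self']
  rw [← div_mul_cancel ⁅a * b, c * d⁆ ⁅b, d⁆]
  exact Subgroup.mul_mem_sup h5 hbd

theorem aux_L {G : Type*} [Group G] (K X : Subgroup G) [hK : K.Normal]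
    (hKX : K ⊔ X = ⊤) (i : ℕ) :
    (lowerGCentralSeries (MulAut.conjNormal.comp X.subtype : ↥X →* MulAut ↥K) (i + 1)).map
      K.subtype = ⁅(⊤ : Subgroup G),
    (lowerGCentralSeries (MulAut.conjNormal.comp X.subtype : ↥X →* MulAut ↥K) i).map
      K.subtype⁆ := by
  apply le_antisymm
  · rw [Subgroup.map_le_iff_le_comap, lowerGCentralSeries, Subgroup.closure_le]
    rintro _ ⟨k, l, g, hl, rfl⟩
    have := Subgroup.commutator_mem_commutator (Subgroup.mem_top ((k : G) * g))
      (Subgroup.mem_map_of_mem K.subtype hl)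
    rw [SetLike.mem_coe, Subgroup.mem_comap]
    convert this using 1
    simp [commutatorElement_def, MulAut.conjNormal_apply]
    group
  · rw [Subgroup.commutator_le]
    rintro g - _ ⟨l, hl, rfl⟩
    obtain ⟨k, hk, x, hx, rfl⟩ := Subgroup.mem_sup_of_normal_left.1
      (hKX ▸ Subgroup.mem_top g : g ∈ K ⊔ X)
    refine ⟨_, Subgroup.subset_closure ⟨⟨k, hk⟩, l, ⟨x, hx⟩, hl, rfl⟩, ?_⟩
    simp [commutatorElement_def, MulAut.conjNormal_apply]
    group

theorem aux_M {G : Type*} [Group G] (K X : Subgroup G) [hK : K.Normal] (i : ℕ)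
    (hn : ((gDerivedSeries (MulAut.conjNormal.comp X.subtype : ↥X →* MulAut ↥K) i).map
      K.subtype).Normal) :
    (gDerivedSeries (MulAut.conjNormal.comp X.subtype : ↥X →* MulAut ↥K) (i + 1)).map
      K.subtype =
    ⁅(gDerivedSeries (MulAut.conjNormal.comp X.subtype : ↥X →* MulAut ↥K) i).map
      K.subtype ⊔ (derivedSeries X i).map X.subtype,
    (gDerivedSeries (MulAut.conjNormal.comp X.subtype : ↥X →* MulAut ↥K) i).map
      K.subtype⁆ := by
  apply le_antisymm
  · rw [Subgroup.map_le_iff_le_comap, gDerivedSeries, Subgroup.closure_le]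
    rintro _ ⟨k, l, hk, hl, g, hg, rfl⟩
    have := Subgroup.commutator_mem_commutator (Subgroup.mul_mem_sup
      (Subgroup.mem_map_of_mem K.subtype hk) (Subgroup.mem_map_of_mem X.subtype hg))
      (Subgroup.mem_map_of_mem K.subtype hl)
    rw [SetLike.mem_coe, Subgroup.mem_comap]
    convert this using 1
    simp [commutatorElement_def, MulAut.conjNormal_apply]
    group
  · rw [Subgroup.commutator_le]
    rintro g hg _ ⟨l, hl, rfl⟩
    obtain ⟨_, ⟨k, hk, rfl⟩, _, ⟨x, hx, rfl⟩, rfl⟩ := Subgroup.mem_sup_of_normal_left.1 hg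
    refine ⟨_, Subgroup.subset_closure ⟨k, l, hk, hl, x, hx, rfl⟩, ?_⟩
    simp [commutatorElement_def, MulAut.conjNormal_apply]
    group

theorem aux_nil {G : Type*} [Group G] (K X : Subgroup G) [hK : K.Normal]
    (hKX : K ⊔ X = ⊤) (i : ℕ) :
    (⊤ : Subgroup G).lowerCentralSeries i =
    (lowerGCentralSeries (MulAut.conjNormal.comp X.subtype : ↥X →* MulAut ↥K) i).map
      K.subtype ⊔ X.lowerCentralSeries i := by
  obtain ⟨L, hLdef⟩ : ∃ L : ℕ → Subgroup G, L = fun i =>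
    (lowerGCentralSeries (MulAut.conjNormal.comp X.subtype : ↥X →* MulAut ↥K) i).map
      K.subtype := ⟨_, rfl⟩
  have hL0 : L 0 = K := by
    rw [hLdef]; simp [lowerGCentralSeries, ← MonoidHom.range_eq_map]
  have hL : ∀ i, L (i + 1) = ⁅(⊤ : Subgroup G), L i⁆ := by
    rw [hLdef]; exact aux_L K X hKX
  have hn : ∀ i, (L i).Normal := by
    intro i
    induction i with
    | zero => rwa [hL0]
    | succ i ih => rw [hL]; infer_instance
  change _ = (fun i => (lowerGCentralSeries (MulAut.conjNormal.comp X.subtype :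
    ↥X →* MulAut ↥K) i).map K.subtype) i ⊔ _
  rw [← hLdef]
  induction i with
  | zero => simp [hL0, hKX]
  | succ i ih =>
    have := hn i
    have := hn (i + 1)
    apply le_antisymm
    · rw [Subgroup.lowerCentralSeries_succ, ih, Subgroup.lowerCentralSeries_succ,
        Subgroup.commutator_comm _ X, Subgroup.commutator_comm _ ⊤, ← hKX]
      apply aux_comm
      · rw [Subgroup.commutator_comm, ← Subgroup.lowerCentralSeries_succ]
        exact X.lowerCentralSeries_antitone (Nat.le_succ i)
      · exact X.lowerCentralSeries_le_self i
      · have h := aux_gamma L hn hL i 0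
        rw [hL0] at h
        exact (Subgroup.commutator_mono le_rfl
          (Subgroup.lowerCentralSeries_mono i le_top)).trans h
      · rw [hKX, hL]
    · apply sup_le
      · rw [hL, Subgroup.lowerCentralSeries_succ, Subgroup.commutator_comm]
        exact Subgroup.commutator_mono (ih ▸ le_sup_left) le_rfl
      · exact Subgroup.lowerCentralSeries_mono (i + 1) le_top

theorem aux_der {G : Type*} [Group G] (K X : Subgroup G) [hK : K.Normal]
    (hKX : K ⊔ X = ⊤) (i : ℕ) :
    ((gDerivedSeries (MulAut.conjNormal.comp X.subtype : ↥X →* MulAut ↥K) i).map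
      K.subtype).Normal ∧
    derivedSeries G i =
    (gDerivedSeries (MulAut.conjNormal.comp X.subtype : ↥X →* MulAut ↥K) i).map
      K.subtype ⊔ (derivedSeries X i).map X.subtype := by
  induction i with
  | zero =>
    simp [gDerivedSeries, ← MonoidHom.range_eq_map, hKX, hK]
  | succ i ih =>
    obtain ⟨hn, ih⟩ := ih
    have hM := aux_M K X i hn
    have hd := derivedSeries_normal G i
    have hn' : ((gDerivedSeries (MulAut.conjNormal.comp X.subtype : ↥X →* MulAut ↥K)
        (i + 1)).map K.subtype).Normal := by
      rw [hM, ← ih]; infer_instance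
    refine ⟨hn', ?_⟩
    rw [derivedSeries_succ, derivedSeries_succ, Subgroup.map_commutator]
    apply le_antisymm
    · rw [ih]
      apply aux_comm
      · exact Subgroup.commutator_le_self _
      · exact le_rfl
      · rw [hM, Subgroup.commutator_comm]
        exact Subgroup.commutator_mono le_sup_right le_rfl
      · rw [hM]
    · apply sup_le
      · rw [hM, ← ih]
        exact Subgroup.commutator_mono le_rfl (ih ▸ le_sup_left)
      · exact Subgroup.commutator_mono (ih ▸ le_sup_right) (ih ▸ le_sup_right)

theorem aux_sInf {P Q R : ℕ → Prop} (h : ∀ n, P n ↔ Q n ∧ R n)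
    (hQ : ∀ m n, m ≤ n → Q m → Q n) (hR : ∀ m n, m ≤ n → R m → R n) (hP : ∃ n, P n) :
    sInf {n | P n} = max (sInf {n | Q n}) (sInf {n | R n}) := by
  have hq : sInf {n | Q n} ∈ {n | Q n} := Nat.sInf_mem (hP.imp fun n hn => ((h n).1 hn).1)
  have hr : sInf {n | R n} ∈ {n | R n} := Nat.sInf_mem (hP.imp fun n hn => ((h n).1 hn).2)
  have hp : sInf {n | P n} ∈ {n | P n} := Nat.sInf_mem hP
  apply le_antisymm
  · exact Nat.sInf_le ((h _).2 ⟨hQ _ _ (le_max_left _ _) hq, hR _ _ (le_max_right _ _) hr⟩)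
  · exact max_le (Nat.sInf_le ((h _).1 hp).1) (Nat.sInf_le ((h _).1 hp).2)

/-- **Proposition 3.8.** Let `G = KX` with `K ⊴ G` and `X ≤ G`, and regard `K` as an
`X`-group via conjugation.  Then
(i) `G` is nilpotent iff `X` is nilpotent and `X` acts nilpotently on `K`, in which case
`nil G = max {nil X, nil_X K}`;
(ii) `G` is solvable iff `X` and `K` are solvable, in which case
`der G = max {der X, der_X K}`. -/
theorem nilpotency_and_solvability_of_product {G : Type*} [Group G]
    (K X : Subgroup G) [hK : K.Normal]
    (hKX : (K : Set G) * (X : Set G) = Set.univ) :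
    (Group.IsNilpotent G ↔
      Group.IsNilpotent ↥X ∧
        ActsNilpotently (MulAut.conjNormal.comp X.subtype : ↥X →* MulAut ↥K)) ∧
    (Group.IsNilpotent G →
      nilClass G = max (nilClass ↥X)
        (actionNilClass (MulAut.conjNormal.comp X.subtype : ↥X →* MulAut ↥K))) ∧
    (IsSolvable G ↔ IsSolvable ↥X ∧ IsSolvable ↥K) ∧
    (IsSolvable G →
      derLength G = max (derLength ↥X)
        (actionDerLength (MulAut.conjNormal.comp X.subtype : ↥X →* MulAut ↥K))) := by
  have hS : K ⊔ X = ⊤ := by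
    rw [eq_top_iff]
    intro g _
    have hg : g ∈ (K : Set G) * (X : Set G) := hKX ▸ Set.mem_univ g
    obtain ⟨k, hk, x, hx, rfl⟩ := Set.mem_mul.1 hg
    exact Subgroup.mul_mem_sup hk hx
  have hnil : ∀ n, (⊤ : Subgroup G).lowerCentralSeries n = ⊥ ↔
      (⊤ : Subgroup X).lowerCentralSeries n = ⊥ ∧
      lowerGCentralSeries (MulAut.conjNormal.comp X.subtype : ↥X →* MulAut ↥K) n = ⊥ := by
    intro n
    rw [aux_nil K X hS n, sup_eq_bot_iff, ← Subgroup.top_subtype_lowerCentralSeries,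
      Subgroup.map_eq_bot_iff_of_injective _ K.subtype_injective,
      Subgroup.map_eq_bot_iff_of_injective _ X.subtype_injective, and_comm]
  have hder : ∀ n, derivedSeries G n = ⊥ ↔ derivedSeries X n = ⊥ ∧
      gDerivedSeries (MulAut.conjNormal.comp X.subtype : ↥X →* MulAut ↥K) n = ⊥ := by
    intro n
    rw [(aux_der K X hS n).2, sup_eq_bot_iff,
      Subgroup.map_eq_bot_iff_of_injective _ K.subtype_injective,
      Subgroup.map_eq_bot_iff_of_injective _ X.subtype_injective, and_comm]
  have mX : ∀ m n, m ≤ n → (⊤ : Subgroup X).lowerCentralSeries m = ⊥ →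
      (⊤ : Subgroup X).lowerCentralSeries n = ⊥ := fun m n hmn h =>
    le_bot_iff.1 (h ▸ Subgroup.lowerCentralSeries_antitone _ hmn)
  have mK : ∀ m n, m ≤ n →
      lowerGCentralSeries (MulAut.conjNormal.comp X.subtype : ↥X →* MulAut ↥K) m = ⊥ →
      lowerGCentralSeries (MulAut.conjNormal.comp X.subtype : ↥X →* MulAut ↥K) n = ⊥ := by
    intro m n hmn h
    induction n, hmn using Nat.le_induction with
    | base => exact h
    | succ n _ ih =>
      rw [← Subgroup.map_eq_bot_iff_of_injective _ K.subtype_injective, aux_L K X hS, ih]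
      simp
  have dX : ∀ m n, m ≤ n → derivedSeries X m = ⊥ → derivedSeries X n = ⊥ := fun m n hmn h =>
    le_bot_iff.1 (h ▸ derivedSeries_antitone _ hmn)
  have dK : ∀ m n, m ≤ n →
      gDerivedSeries (MulAut.conjNormal.comp X.subtype : ↥X →* MulAut ↥K) m = ⊥ →
      gDerivedSeries (MulAut.conjNormal.comp X.subtype : ↥X →* MulAut ↥K) n = ⊥ := by
    intro m n hmn h
    induction n, hmn using Nat.le_induction with
    | base => exact h
    | succ n _ ih =>
      rw [← Subgroup.map_eq_bot_iff_of_injective _ K.subtype_injective,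
        aux_M K X n (aux_der K X hS n).1, ih]
      simp
  refine ⟨?_, ?_, ?_, ?_⟩
  · rw [Subgroup.nilpotent_iff_lowerCentralSeries, Subgroup.nilpotent_iff_lowerCentralSeries]
    constructor
    · rintro ⟨n, hn⟩
      exact ⟨⟨n, ((hnil n).1 hn).1⟩, ⟨n, ((hnil n).1 hn).2⟩⟩
    · rintro ⟨⟨a, ha⟩, ⟨b, hb⟩⟩
      exact ⟨max a b, (hnil _).2 ⟨mX _ _ (le_max_left _ _) ha, mK _ _ (le_max_right _ _) hb⟩⟩
  · intro h
    unfold nilClass actionNilClass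
    change sInf {n | Subgroup.upperCentralSeries G n = ⊤} =
      max (sInf {n | Subgroup.upperCentralSeries X n = ⊤}) _
    simp only [← Subgroup.lowerCentralSeries_eq_bot_iff_upperCentralSeries_eq_top]
    exact aux_sInf hnil mX mK (Subgroup.nilpotent_iff_lowerCentralSeries.1 h)
  · change Group.IsSolvable G ↔ Group.IsSolvable X ∧ Group.IsSolvable K
    constructor
    · intro h
      exact ⟨Group.isSolvable_of_isSolvable_injective X.subtype_injective,
        Group.isSolvable_of_isSolvable_injective K.subtype_injective⟩
    · rintro ⟨h1, h2⟩
      rw [Group.isSolvable_iff_subgroup_quotient K]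
      refine ⟨h2, ?_⟩
      have hs : Function.Surjective ((QuotientGroup.mk' K).comp X.subtype) := by
        intro q
        obtain ⟨g, rfl⟩ := QuotientGroup.mk'_surjective K q
        obtain ⟨k, hk, x, hx, rfl⟩ := Subgroup.mem_sup_of_normal_left.1
          (hS ▸ Subgroup.mem_top g : g ∈ K ⊔ X)
        refine ⟨⟨x, hx⟩, ?_⟩
        have : (k : G ⧸ K) = 1 := (QuotientGroup.eq_one_iff k).2 hk
        simp [this]
      exact Group.isSolvable_of_surjective hs
  · intro h
    exact aux_sInf hder dX dK h.solvable
end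

section
/- Let G be a group and 1 → F → R̄ → R → 1 an extension of G-groups (with G-equivariant maps) such that F is finite and R̄ is nilpotent and radicable. Then: (i) if G acts nilpotently on R, then G acts nilpotently on R̄ and nil_G R̄ = nil_G R; (ii) if G acts solvably on R, then G acts solvably on R̄ and der_G(R̄) = der_G(R). -/
/-- A group `R` is radicable if every element is an `m`-th power for each `m ≥ 1`. -/
def IsRadicable (R : Type*) [Group R] : Prop :=
  ∀ m : ℕ, 0 < m → ∀ g : R, ∃ x : R, x ^ m = g

/-- `L` is generated by its `m`-th powers, for each positive `m`. -/
def PowGen {K : Type*} [Group K] (L : Subgroup K) : Prop :=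
  ∀ m : ℕ, 0 < m → L ≤ Subgroup.closure {y | ∃ x ∈ L, y = x ^ m}

/-- In a nilpotent group, multiplying by an element of a normal subgroup of exponent `m` does
not change a suitable power. -/
theorem exists_pow_eq {K : Type*} [Group K] [Group.IsNilpotent K] (M : Subgroup K) [M.Normal]
    (m : ℕ) (hm : 0 < m) (hM : ∀ a ∈ M, a ^ m = 1) :
    ∃ n : ℕ, 0 < n ∧ ∀ a ∈ M, ∀ x : K, (a * x) ^ n = x ^ n := by
  have key : ∀ i : ℕ, ∀ a ∈ M, ∀ x : K,
      (a * x) ^ (m ^ i) * (x ^ (m ^ i))⁻¹ ∈ M ⊓ (⊤ : Subgroup K).lowerCentralSeries i := by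
    intro i
    induction i with
    | zero => intro a ha x; simpa using ha
    | succ i ih =>
      intro a ha x
      have h := ih a ha x
      set b := (a * x) ^ (m ^ i) * (x ^ (m ^ i))⁻¹ with hb
      set z := x ^ (m ^ i) with hz
      have e : (a * x) ^ (m ^ i) = b * z := by rw [hb]; group
      rw [pow_succ, pow_mul, pow_mul, e, ← hz]
      have hc : b * z * b⁻¹ * z⁻¹ ∈ M ⊓ (⊤ : Subgroup K).lowerCentralSeries (i+1) := by
        refine ⟨?_, ?_⟩
        · have h1 : z * b⁻¹ * z⁻¹ ∈ M := Subgroup.Normal.conj_mem inferInstance _ (M.inv_mem h.1) z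
          have := M.mul_mem h.1 h1
          simpa [mul_assoc] using this
        · exact Subgroup.commutator_mem_commutator h.2 (Subgroup.mem_top z)
      generalize hP : M ⊓ (⊤ : Subgroup K).lowerCentralSeries (i+1) = P at hc ⊢
      have : P.Normal := by rw [← hP]; infer_instance
      rw [← QuotientGroup.eq_one_iff] at hc ⊢
      simp only [QuotientGroup.mk_mul, QuotientGroup.mk_inv, QuotientGroup.mk_pow] at hc ⊢
      have hcm : Commute (b : K ⧸ P) (z : K ⧸ P) := by
        rw [mul_inv_eq_one, mul_inv_eq_iff_eq_mul] at hc
        exact hc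
      rw [hcm.mul_pow, mul_inv_cancel_right, ← QuotientGroup.mk_pow, hM b h.1]
      rfl
  obtain ⟨c, hc⟩ := (Subgroup.nilpotent_iff_lowerCentralSeries (G := K)).1 inferInstance
  refine ⟨m ^ c, pow_pos hm c, fun a ha x => ?_⟩
  have := (Subgroup.mem_inf.1 (key c a ha x)).2
  rw [hc, Subgroup.mem_bot, mul_inv_eq_one] at this
  exact this

theorem powGen_step_top {L : Type*} [Group L] [Group.IsNilpotent L] (S : Set (L →* L))
    (hL : PowGen (⊤ : Subgroup L)) :
    PowGen (Subgroup.closure {y : L | ∃ α ∈ S, ∃ l : L, y = α l * l⁻¹}) := by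
  set M := Subgroup.closure {y : L | ∃ α ∈ S, ∃ l : L, y = α l * l⁻¹} with hMdef
  have hgen : ∀ α ∈ S, ∀ l : L, α l * l⁻¹ ∈ M := fun α hα l =>
    Subgroup.subset_closure ⟨α, hα, l, rfl⟩
  have hMn : M.Normal := by
    constructor
    intro x hx y
    have hle : M ≤ M.comap (MulAut.conj y).toMonoidHom := by
      rw [hMdef, Subgroup.closure_le, ← hMdef]
      rintro _ ⟨α, hα, l, rfl⟩
      have := M.mul_mem (M.inv_mem (hgen α hα y)) (hgen α hα (y * l))
      simp only [SetLike.mem_coe, Subgroup.mem_comap]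
      simpa [mul_assoc] using this
    simpa using hle hx
  intro m hm
  set N := Subgroup.closure {y | ∃ x ∈ M, y = x ^ m} with hN
  have hNn : N.Normal := by
    constructor
    intro x hx y
    have hle : N ≤ N.comap (MulAut.conj y).toMonoidHom := by
      rw [hN, Subgroup.closure_le, ← hN]
      rintro _ ⟨a, ha, rfl⟩
      simp only [SetLike.mem_coe, Subgroup.mem_comap]
      refine Subgroup.subset_closure ⟨y * a * y⁻¹, hMn.conj_mem a ha y, ?_⟩
      simp [conj_pow]
    simpa using hle hx
  have hMq : (M.map (QuotientGroup.mk' N)).Normal :=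
    hMn.map _ (QuotientGroup.mk'_surjective N)
  obtain ⟨n, hn, hpow⟩ := exists_pow_eq (M.map (QuotientGroup.mk' N)) m hm (by
    rintro _ ⟨a, ha, rfl⟩
    rw [← map_pow, QuotientGroup.mk'_apply, QuotientGroup.eq_one_iff]
    exact Subgroup.subset_closure ⟨a, ha, rfl⟩)
  rw [hMdef, Subgroup.closure_le]
  rintro _ ⟨α, hα, l, rfl⟩
  have heq : ∀ l : L, l ∈ MonoidHom.eqLocus ((QuotientGroup.mk' N).comp α)
      (QuotientGroup.mk' N) := by
    intro l
    have h1 := hL n hn (Subgroup.mem_top l)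
    refine (Subgroup.closure_le _).2 ?_ h1
    rintro _ ⟨x, -, rfl⟩
    change QuotientGroup.mk' N (α (x ^ n)) = QuotientGroup.mk' N (x ^ n)
    have h2 := hpow _ (Subgroup.mem_map_of_mem (QuotientGroup.mk' N) (hgen α hα x))
      (QuotientGroup.mk' N x)
    rw [← map_mul, inv_mul_cancel_right] at h2
    rw [map_pow, map_pow, map_pow, h2]
  have h3 : QuotientGroup.mk' N (α l) = QuotientGroup.mk' N l := heq l
  rw [SetLike.mem_coe, ← QuotientGroup.eq_one_iff, ← QuotientGroup.mk'_apply, map_mul, map_inv, h3,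
    mul_inv_cancel]

theorem PowGen.map {K L : Type*} [Group K] [Group L] (f : L →* K) {M : Subgroup L}
    (h : PowGen M) : PowGen (M.map f) := by
  intro m hm
  refine (Subgroup.map_mono (h m hm)).trans ?_
  rw [MonoidHom.map_closure]
  apply Subgroup.closure_mono
  rintro _ ⟨_, ⟨x, hx, rfl⟩, rfl⟩
  exact ⟨f x, Subgroup.mem_map_of_mem f hx, map_pow f x m⟩

theorem powGen_step {K : Type*} [Group K] [Group.IsNilpotent K] (L M : Subgroup K)
    (S : Set (K →* K))
    (hM : M = Subgroup.closure {y : K | ∃ α ∈ S, ∃ l ∈ L, y = α l * l⁻¹})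
    (hML : M ≤ L) (hL : PowGen L) : PowGen M := by
  have hS : ∀ α ∈ S, ∀ l ∈ L, α l ∈ L := by
    intro α hα l hl
    have h1 : α l * l⁻¹ ∈ M := by
      rw [hM]; exact Subgroup.subset_closure ⟨α, hα, l, hl, rfl⟩
    simpa using L.mul_mem (hML h1) hl
  have hLtop : PowGen (⊤ : Subgroup L) := by
    intro m hm x _
    have h1 := hL m hm x.2
    have h2 : Subgroup.closure {y | ∃ x ∈ L, y = x ^ m} ≤
        (Subgroup.closure {y : L | ∃ x ∈ (⊤ : Subgroup L), y = x ^ m}).map L.subtype := by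
      rw [Subgroup.closure_le]
      rintro _ ⟨z, hz, rfl⟩
      exact ⟨(⟨z, hz⟩ : L) ^ m, Subgroup.subset_closure ⟨_, Subgroup.mem_top _, rfl⟩, rfl⟩
    obtain ⟨y, hy, hxy⟩ := h2 h1
    rwa [Subtype.ext hxy] at hy
  have := (powGen_step_top {β : L →* L | ∃ α ∈ S, ∀ l : L, (β l : K) = α l} hLtop).map L.subtype
  convert this using 1
  rw [hM, MonoidHom.map_closure]
  congr 1
  ext y
  constructor
  · rintro ⟨α, hα, l, hl, rfl⟩
    refine ⟨_, ⟨(α.comp L.subtype).codRestrict L (fun x => hS α hα x x.2), ⟨α, hα, fun l => rfl⟩,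
      ⟨l, hl⟩, rfl⟩, rfl⟩
  · rintro ⟨_, ⟨β, ⟨α, hα, hβ⟩, l, rfl⟩, rfl⟩
    exact ⟨α, hα, l, l.2, by simp [hβ]⟩

theorem PowGen.eq_bot {K : Type*} [Group K] {L P : Subgroup K} (h : PowGen L) (hLP : L ≤ P)
    (hP : Finite P) : L = ⊥ := by
  rw [eq_bot_iff]
  refine (h (Nat.card P) Nat.card_pos).trans ?_
  rw [Subgroup.closure_le]
  rintro _ ⟨x, hx, rfl⟩
  have := pow_card_eq_one' (x := (⟨x, hLP hx⟩ : P))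
  exact congrArg Subtype.val this

theorem powGen_top {K : Type*} [Group K] (h : IsRadicable K) : PowGen (⊤ : Subgroup K) := by
  intro m hm x _
  obtain ⟨y, hy⟩ := h m hm x
  exact Subgroup.subset_closure ⟨y, Subgroup.mem_top _, hy.symm⟩

theorem lowerG_succ_le {G K : Type*} [Group G] [Group K] (φ : G →* MulAut K) (i : ℕ) :
    lowerGCentralSeries φ (i + 1) ≤ lowerGCentralSeries φ i := by
  induction i with
  | zero => exact le_top
  | succ i ih =>
    rw [lowerGCentralSeries, lowerGCentralSeries]
    apply Subgroup.closure_mono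
    rintro _ ⟨k, l, g, hl, rfl⟩
    exact ⟨k, l, g, ih hl, rfl⟩

theorem gDerived_succ_le {G K : Type*} [Group G] [Group K] (φ : G →* MulAut K) (i : ℕ) :
    gDerivedSeries φ (i + 1) ≤ gDerivedSeries φ i := by
  induction i with
  | zero => exact le_top
  | succ i ih =>
    rw [gDerivedSeries, gDerivedSeries]
    apply Subgroup.closure_mono
    rintro _ ⟨k, l, hk, hl, g, hg, rfl⟩
    exact ⟨k, l, ih hk, ih hl, g, derivedSeries_antitone G (Nat.le_succ i) hg, rfl⟩

theorem powGen_lowerG {G K : Type*} [Group G] [Group K] [Group.IsNilpotent K]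
    (h : IsRadicable K) (φ : G →* MulAut K) (i : ℕ) : PowGen (lowerGCentralSeries φ i) := by
  induction i with
  | zero => exact powGen_top h
  | succ i ih =>
    refine powGen_step _ _
      {α : K →* K | ∃ (k : K) (g : G), α = (MulAut.conj k * φ g).toMonoidHom} ?_
      (lowerG_succ_le φ i) ih
    rw [lowerGCentralSeries]
    congr 1
    ext y
    constructor
    · rintro ⟨k, l, g, hl, rfl⟩
      exact ⟨_, ⟨k, g, rfl⟩, l, hl, by simp⟩
    · rintro ⟨_, ⟨k, g, rfl⟩, l, hl, rfl⟩
      exact ⟨k, l, g, hl, by simp⟩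

theorem powGen_gDerived {G K : Type*} [Group G] [Group K] [Group.IsNilpotent K]
    (h : IsRadicable K) (φ : G →* MulAut K) (i : ℕ) : PowGen (gDerivedSeries φ i) := by
  induction i with
  | zero => exact powGen_top h
  | succ i ih =>
    refine powGen_step _ _
      {α : K →* K | ∃ k ∈ gDerivedSeries φ i, ∃ g ∈ derivedSeries G i,
        α = (MulAut.conj k * φ g).toMonoidHom} ?_
      (gDerived_succ_le φ i) ih
    rw [gDerivedSeries]
    congr 1
    ext y
    constructor
    · rintro ⟨k, l, hk, hl, g, hg, rfl⟩
      exact ⟨_, ⟨k, hk, g, hg, rfl⟩, l, hl, by simp⟩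
    · rintro ⟨_, ⟨k, hk, g, hg, rfl⟩, l, hl, rfl⟩
      exact ⟨k, l, hk, hl, g, hg, by simp⟩

theorem map_lowerG {G K Q : Type*} [Group G] [Group K] [Group Q] (φ : G →* MulAut K)
    (χ : G →* MulAut Q) (f : K →* Q) (hf : Function.Surjective f)
    (h : ∀ g x, f (φ g x) = χ g (f x)) (i : ℕ) :
    (lowerGCentralSeries φ i).map f = lowerGCentralSeries χ i := by
  induction i with
  | zero => exact Subgroup.map_top_of_surjective f hf
  | succ i ih =>
    rw [lowerGCentralSeries, lowerGCentralSeries, MonoidHom.map_closure]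
    congr 1
    ext y
    constructor
    · rintro ⟨_, ⟨k, l, g, hl, rfl⟩, rfl⟩
      exact ⟨f k, f l, g, ih ▸ Subgroup.mem_map_of_mem f hl, by simp [h]⟩
    · rintro ⟨k, l, g, hl, rfl⟩
      rw [← ih] at hl
      obtain ⟨l, hl, rfl⟩ := hl
      obtain ⟨k, rfl⟩ := hf k
      exact ⟨_, ⟨k, l, g, hl, rfl⟩, by simp [h]⟩

theorem map_gDerived {G K Q : Type*} [Group G] [Group K] [Group Q] (φ : G →* MulAut K)
    (χ : G →* MulAut Q) (f : K →* Q) (hf : Function.Surjective f)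
    (h : ∀ g x, f (φ g x) = χ g (f x)) (i : ℕ) :
    (gDerivedSeries φ i).map f = gDerivedSeries χ i := by
  induction i with
  | zero => exact Subgroup.map_top_of_surjective f hf
  | succ i ih =>
    rw [gDerivedSeries, gDerivedSeries, MonoidHom.map_closure]
    congr 1
    ext y
    constructor
    · rintro ⟨_, ⟨k, l, hk, hl, g, hg, rfl⟩, rfl⟩
      exact ⟨f k, f l, ih ▸ Subgroup.mem_map_of_mem f hk, ih ▸ Subgroup.mem_map_of_mem f hl,
        g, hg, by simp [h]⟩
    · rintro ⟨k, l, hk, hl, g, hg, rfl⟩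
      rw [← ih] at hl hk
      obtain ⟨l, hl, rfl⟩ := hl
      obtain ⟨k, hk, rfl⟩ := hk
      exact ⟨_, ⟨k, l, hk, hl, g, hg, rfl⟩, by simp [h]⟩

/-- **Lemma 3.11.** Let `1 → F → R̄ → R → 1` be an extension of `G`-groups with `F` finite
and `R̄` nilpotent and radicable.  Then:
(i) if `G` acts nilpotently on `R`, then `G` acts nilpotently on `R̄` and
`nil_G R̄ = nil_G R`;
(ii) if `G` acts solvably on `R`, then `G` acts solvably on `R̄` and `der_G R̄ = der_G R`. -/
theorem finite_kernel_extension_action {G F Rbar R : Type*}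
    [Group G] [Group F] [Group Rbar] [Group R]
    (aF : G →* MulAut F) (aRbar : G →* MulAut Rbar) (aR : G →* MulAut R)
    (ι : F →* Rbar) (ψ : Rbar →* R)
    (hι : Function.Injective ι) (hψ : Function.Surjective ψ)
    (hexact : ι.range = ψ.ker)
    (hιeq : ∀ (g : G) (x : F), ι (aF g x) = aRbar g (ι x))
    (hψeq : ∀ (g : G) (x : Rbar), ψ (aRbar g x) = aR g (ψ x))
    (hF : Finite F) (hnil : Group.IsNilpotent Rbar) (hrad : IsRadicable Rbar) :
    (ActsNilpotently aR → ActsNilpotently aRbar ∧ actionNilClass aRbar = actionNilClass aR) ∧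
    (ActsSolvably aR → ActsSolvably aRbar ∧ actionDerLength aRbar = actionDerLength aR) := by
  have hfin : Finite ψ.ker := by
    rw [← hexact]
    exact Finite.of_surjective ι.rangeRestrict ι.rangeRestrict_surjective
  have key : ∀ (A : Subgroup Rbar) (B : Subgroup R), PowGen A → A.map ψ = B →
      (A = ⊥ ↔ B = ⊥) := by
    rintro A B hA rfl
    constructor
    · rintro rfl
      simp
    · intro h
      exact hA.eq_bot ((Subgroup.map_eq_bot_iff A).1 h) hfin
  have h1 : ∀ i, lowerGCentralSeries aRbar i = ⊥ ↔ lowerGCentralSeries aR i = ⊥ := fun i =>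
    key _ _ (powGen_lowerG hrad aRbar i) (map_lowerG aRbar aR ψ hψ hψeq i)
  have h2 : ∀ i, gDerivedSeries aRbar i = ⊥ ↔ gDerivedSeries aR i = ⊥ := fun i =>
    key _ _ (powGen_gDerived hrad aRbar i) (map_gDerived aRbar aR ψ hψ hψeq i)
  refine ⟨fun ⟨c, hc⟩ => ⟨⟨c, (h1 c).2 hc⟩, ?_⟩, fun ⟨c, hc⟩ => ⟨⟨c, (h2 c).2 hc⟩, ?_⟩⟩
  · simp only [actionNilClass, h1]
  · simp only [actionDerLength, h2]
end

section
/- Let G be a group with a finite normal subgroup F, and let φ : R → G and ψ : R → G be group homomorphisms, where R is a radicable group. If φ(r)F = ψ(r)F for all r ∈ R, then φ = ψ. -/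
/-- **Lemma 3.15.** Let `G` have a finite normal subgroup `F`, and let `φ, ψ : R → G` be
homomorphisms from a radicable group `R`.  If `φ(r)F = ψ(r)F` for all `r ∈ R`, then
`φ = ψ`. -/
theorem eq_of_radicable_of_eq_mod_finite {R G : Type*} [Group R] [Group G]
    (F : Subgroup G) (hFn : F.Normal) (hF : Finite ↥F)
    (hR : IsRadicable R) (φ ψ : R →* G)
    (h : ∀ r : R, (φ r)⁻¹ * ψ r ∈ F) : φ = ψ := by
  have hfin : Finite (MulAut F) := inferInstance
  have hc : ∀ x : R, ∀ f ∈ F, Commute (φ x) f := by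
    intro x f hf
    obtain ⟨y, rfl⟩ := hR (Nat.card (MulAut F)) Nat.card_pos x
    have h1 : MulAut.conjNormal (φ (y ^ Nat.card (MulAut F))) = (1 : MulAut F) := by
      rw [map_pow, map_pow, pow_card_eq_one']
    have h2 := congrArg Subtype.val (DFunLike.congr_fun h1 ⟨f, hf⟩)
    rw [MulAut.conjNormal_apply] at h2
    exact mul_inv_eq_iff_eq_mul.mp h2
  ext r
  obtain ⟨x, rfl⟩ := hR (Nat.card F) Nat.card_pos r
  have hb : ψ x = φ x * ((φ x)⁻¹ * ψ x) := by group
  have hp : ((φ x)⁻¹ * ψ x) ^ Nat.card F = 1 :=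
    congrArg Subtype.val (pow_card_eq_one' (x := (⟨_, h x⟩ : F)))
  rw [map_pow, map_pow, hb, (hc x _ (h x)).mul_pow, hp, mul_one]
end

section
/- Let G be a group and A a ℤG-module that is finite (as a set). Then there exist a ℤG-module A* and a surjective ℤG-module homomorphism φ : A* → A such that the underlying abelian group of A* is free abelian of finite rank (equivalently, torsion-free and polycyclic). -/
/-- **Lemma 3.18.** Let `G` be a group and `A` a finite `ℤG`-module.  Then there are a
`ℤG`-module `A*` whose underlying abelian group is free abelian of finite rank and a
surjective `ℤG`-module homomorphism `φ : A* → A`. -/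
theorem finite_module_covered_by_free (G : Type*) [Group G]
    (A : Type*) [AddCommGroup A] [DistribMulAction G A] [Finite A] :
    ∃ (A' : Type) (_ : AddCommGroup A') (_ : DistribMulAction G A'),
      (∃ n : ℕ, Nonempty (A' ≃+ (Fin n → ℤ))) ∧
      ∃ φ : A' →+ A, Function.Surjective φ ∧ ∀ (g : G) (a : A'), φ (g • a) = g • φ a := by
  obtain ⟨n, ⟨e⟩⟩ := Finite.exists_equiv_fin A
  let inst : DistribMulAction G (Fin n → ℤ) :=
    { smul := fun g f i => f (e (g⁻¹ • e.symm i))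
      one_smul := fun f => by
        funext i
        change f (e ((1 : G)⁻¹ • e.symm i)) = f i
        simp
      mul_smul := fun g h f => by
        funext i
        change f (e ((g * h)⁻¹ • e.symm i)) =
          f (e (h⁻¹ • e.symm (e (g⁻¹ • e.symm i))))
        simp [mul_smul]
      smul_zero := fun g => rfl
      smul_add := fun g f f' => rfl }
  refine ⟨Fin n → ℤ, inferInstance, inst, ⟨n, ⟨AddEquiv.refl _⟩⟩, ?_⟩
  let φ : (Fin n → ℤ) →+ A :=
    { toFun := fun f => ∑ i, f i • e.symm i
      map_zero' := by simp
      map_add' := fun f f' => by simp [add_smul, Finset.sum_add_distrib] }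
  refine ⟨φ, fun a => ⟨Pi.single (e a) 1, ?_⟩, fun g f => ?_⟩
  · change ∑ i, (Pi.single (e a) 1 : Fin n → ℤ) i • e.symm i = a
    rw [Finset.sum_eq_single (e a)]
    · simp
    · intro b _ hb
      simp [Pi.single_eq_of_ne hb]
    · simp
  · change ∑ i, f (e (g⁻¹ • e.symm i)) • e.symm i = g • ∑ i, f i • e.symm i
    rw [Finset.smul_sum]
    refine Fintype.sum_equiv
      ((e.symm.trans (MulAction.toPerm g⁻¹)).trans e) _ _ (fun i => ?_)
    have h := (DistribSMul.toAddMonoidHom A g).map_zsmul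
      (f (e (g⁻¹ • e.symm i))) (g⁻¹ • e.symm i)
    simp only [DistribSMul.toAddMonoidHom_apply, smul_inv_smul] at h
    simp [h]
end

section
/- Let π be a set of primes and G a group. If G acts π-integrally on ℤG-modules A and B, then G acts π-integrally on the tensor product A ⊗_ℤ B, regarded as a ℤG-module via the diagonal action g·(a ⊗ b) = (g·a) ⊗ (g·b). -/
open scoped TensorProduct

/-- A nonzero integer is a `π`-number if all its prime divisors lie in `π`. -/
def IsPiNumber (π : Set ℕ) (n : ℤ) : Prop :=
  n ≠ 0 ∧ ∀ p : ℕ, p.Prime → (p : ℤ) ∣ n → p ∈ π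

/-- `G` acts `π`-integrally on the `ℤG`-module `A`. -/
def ActsPiIntegrally (π : Set ℕ) (G A : Type*) [Group G] [AddCommGroup A]
    [DistribMulAction G A] : Prop :=
  ∀ g : G, ∃ (m : ℕ) (α : Fin (m + 1) → ℤ), IsPiNumber π (α (Fin.last m)) ∧
    ∀ a : A, ∑ i : Fin (m + 1), α i • (g ^ (i : ℕ)) • a = 0

/-- The action of `g ∈ G` on `A ⊗_ℤ B` induced diagonally:
`g • (a ⊗ b) = (g • a) ⊗ (g • b)`. -/
noncomputable def diagTensorAction {G : Type*} (A B : Type*) [Group G]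
    [AddCommGroup A] [AddCommGroup B] [DistribMulAction G A] [DistribMulAction G B]
    (g : G) : A ⊗[ℤ] B →ₗ[ℤ] A ⊗[ℤ] B :=
  TensorProduct.map ((DistribMulAction.toAddMonoidHom A g).toIntLinearMap)
    ((DistribMulAction.toAddMonoidHom B g).toIntLinearMap)

open Polynomial in
lemma isIntegral_of_fin_sum {S : Type*} [CommRing S] (x : S) (m : ℕ) (α : Fin (m + 1) → ℤ)
    (h0 : α (Fin.last m) ≠ 0) (h : ∑ i : Fin (m + 1), α i • x ^ (i : ℕ) = 0) :
    IsIntegral ℤ (α (Fin.last m) • x) := by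
  set p : ℤ[X] := ∑ i : Fin (m + 1), monomial (i : ℕ) (α i) with hp
  have hc : p.coeff m = α (Fin.last m) := by
    rw [hp, finsetSum_coeff, Finset.sum_eq_single (Fin.last m)]
    · simp
    · intro b _ hb
      rw [coeff_monomial, if_neg]
      intro h
      exact hb (Fin.ext (by simpa using h))
    · simp
  have hd : p.natDegree ≤ m := by
    apply natDegree_sum_le_of_forall_le
    intro i _
    exact (natDegree_monomial_le _).trans (Nat.lt_succ_iff.mp i.2)
  have hd' : p.natDegree = m :=
    le_antisymm hd (le_natDegree_of_ne_zero (by rw [hc]; exact h0))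
  have hl : p.leadingCoeff = α (Fin.last m) := by rw [leadingCoeff, hd', hc]
  rw [← hl]
  apply isIntegral_leadingCoeff_smul
  rw [hp, map_sum, ← h]
  refine Finset.sum_congr rfl fun i _ => ?_
  rw [aeval_monomial]
  simp

open Polynomial in
open scoped IsMulCommutative in
lemma exists_coeffs_mul {E : Type*} [Ring E] (x y : E) (hxy : x * y = y * x)
    (m n : ℕ) (α : Fin (m + 1) → ℤ) (β : Fin (n + 1) → ℤ)
    (hα : α (Fin.last m) ≠ 0) (hβ : β (Fin.last n) ≠ 0)
    (hx : ∑ i : Fin (m + 1), α i • x ^ (i : ℕ) = 0)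
    (hy : ∑ i : Fin (n + 1), β i • y ^ (i : ℕ) = 0) :
    ∃ (k : ℕ) (γ : Fin (k + 1) → ℤ),
      γ (Fin.last k) = (α (Fin.last m) * β (Fin.last n)) ^ k ∧
      ∑ i : Fin (k + 1), γ i • (x * y) ^ (i : ℕ) = 0 := by
  have hcomm : ∀ a ∈ ({x, y} : Set E), ∀ b ∈ ({x, y} : Set E), a * b = b * a := by
    rintro a (rfl | rfl) b (rfl | rfl) <;> simp [hxy]
  have := Algebra.isMulCommutative_adjoin ℤ hcomm
  let S := Algebra.adjoin ℤ ({x, y} : Set E)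
  let x' : S := ⟨x, Algebra.subset_adjoin (by simp)⟩
  let y' : S := ⟨y, Algebra.subset_adjoin (by simp)⟩
  have hx' : ∑ i : Fin (m + 1), α i • x' ^ (i : ℕ) = 0 := by
    apply Subtype.ext
    simpa [x'] using hx
  have hy' : ∑ i : Fin (n + 1), β i • y' ^ (i : ℕ) = 0 := by
    apply Subtype.ext
    simpa [y'] using hy
  obtain ⟨s, hs, hs0⟩ :=
    (isIntegral_of_fin_sum x' m α hα hx').mul (isIntegral_of_fin_sum y' n β hβ hy')
  set c := α (Fin.last m) * β (Fin.last n) with hc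
  refine ⟨s.natDegree, fun i => s.coeff i * c ^ (i : ℕ), by simp [hs], ?_⟩
  have e : (α (Fin.last m) • x') * (β (Fin.last n) • y') = c • (x' * y') := by
    rw [smul_mul_smul_comm]
  rw [e, eval₂_eq_sum_range, Finset.sum_range] at hs0
  have h2 := congrArg (Subtype.val : S → E) hs0
  simp only [AddSubmonoidClass.coe_finsetSum] at h2
  rw [← ZeroMemClass.coe_zero S, ← h2]
  refine Finset.sum_congr rfl fun i _ => ?_
  have h3 : ((c : E) * (x * y)) ^ (i : ℕ) = (c : E) ^ (i : ℕ) * (x * y) ^ (i : ℕ) :=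
    (Int.cast_commute c (x * y)).mul_pow _
  simp [mul_smul, x', y', h3]

lemma IsPiNumber.mul {π : Set ℕ} {a b : ℤ} (ha : IsPiNumber π a) (hb : IsPiNumber π b) :
    IsPiNumber π (a * b) := by
  refine ⟨mul_ne_zero ha.1 hb.1, fun p hp h => ?_⟩
  rcases (Nat.prime_iff_prime_int.mp hp).dvd_or_dvd h with h | h
  · exact ha.2 p hp h
  · exact hb.2 p hp h

lemma IsPiNumber.pow {π : Set ℕ} {a : ℤ} (ha : IsPiNumber π a) (k : ℕ) :
    IsPiNumber π (a ^ k) := by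
  refine ⟨pow_ne_zero _ ha.1, fun p hp h => ?_⟩
  exact ha.2 p hp ((Nat.prime_iff_prime_int.mp hp).dvd_of_dvd_pow h)

lemma addEnd_sum_apply {T : Type*} [AddCommGroup T] (x : AddMonoid.End T) (m : ℕ)
    (α : Fin (m + 1) → ℤ) (t : T) :
    (∑ i : Fin (m + 1), α i • x ^ (i : ℕ)) t = ∑ i : Fin (m + 1), α i • (x ^ (i : ℕ)) t := by
  let ev : AddMonoid.End T →+ T :=
    { toFun := fun u => u t, map_zero' := rfl, map_add' := fun _ _ => rfl }
  change ev _ = _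
  rw [map_sum]
  exact Finset.sum_congr rfl fun i _ => map_zsmul ev (α i) (x ^ (i : ℕ))

lemma addEnd_mul_apply {T : Type*} [AddCommGroup T] (x y : AddMonoid.End T) (t : T) :
    (x * y) t = x (y t) := rfl

lemma addEnd_tensor_ext {A B : Type*} [AddCommGroup A] [AddCommGroup B]
    (u v : AddMonoid.End (A ⊗[ℤ] B)) (h : ∀ a b, u (a ⊗ₜ b) = v (a ⊗ₜ b)) : u = v := by
  refine AddMonoidHom.ext fun t => ?_
  induction t with
  | zero => exact (map_zero u).trans (map_zero v).symm
  | tmul a b => exact h a b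
  | add a b ha hb => exact (map_add u a b).trans ((congrArg₂ (· + ·) ha hb).trans (map_add v a b).symm)

/-- **Lemma 3.21.** If `G` acts `π`-integrally on the `ℤG`-modules `A` and `B`, then `G` acts
`π`-integrally on `A ⊗_ℤ B` with the diagonal action. -/
theorem actsPiIntegrally_tensor (π : Set ℕ) (hπ : ∀ p ∈ π, p.Prime)
    (G A B : Type*) [Group G] [AddCommGroup A] [AddCommGroup B]
    [DistribMulAction G A] [DistribMulAction G B]
    (hA : ActsPiIntegrally π G A) (hB : ActsPiIntegrally π G B) :
    ∀ g : G, ∃ (m : ℕ) (α : Fin (m + 1) → ℤ), IsPiNumber π (α (Fin.last m)) ∧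
      ∀ t : A ⊗[ℤ] B,
        ∑ i : Fin (m + 1), α i • (diagTensorAction A B (g ^ (i : ℕ))) t = 0 := by
  intro g
  obtain ⟨m, α, hα, hA⟩ := hA g
  obtain ⟨n, β, hβ, hB⟩ := hB g
  let f : A →ₗ[ℤ] A := (DistribMulAction.toAddMonoidHom A g).toIntLinearMap
  let f' : B →ₗ[ℤ] B := (DistribMulAction.toAddMonoidHom B g).toIntLinearMap
  let x : AddMonoid.End (A ⊗[ℤ] B) := (TensorProduct.map f LinearMap.id).toAddMonoidHom
  let y : AddMonoid.End (A ⊗[ℤ] B) := (TensorProduct.map LinearMap.id f').toAddMonoidHom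
  have hxp : ∀ (i : ℕ) (a : A) (b : B), (x ^ i) (a ⊗ₜ b) = (g ^ i • a) ⊗ₜ b := by
    intro i a b
    induction i with
    | zero => simp
    | succ i ih => rw [pow_succ', addEnd_mul_apply, ih, pow_succ', mul_smul]; rfl
  have hyp : ∀ (i : ℕ) (a : A) (b : B), (y ^ i) (a ⊗ₜ b) = a ⊗ₜ (g ^ i • b) := by
    intro i a b
    induction i with
    | zero => simp
    | succ i ih => rw [pow_succ', addEnd_mul_apply, ih, pow_succ', mul_smul]; rfl
  have hxy : x * y = y * x := addEnd_tensor_ext _ _ fun a b => rfl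
  have hx : ∑ i : Fin (m + 1), α i • x ^ (i : ℕ) = 0 := by
    refine addEnd_tensor_ext _ _ fun a b => ?_
    have : ∀ i : Fin (m + 1), α i • ((g ^ (i : ℕ) • a) ⊗ₜ[ℤ] b)
        = (α i • g ^ (i : ℕ) • a) ⊗ₜ[ℤ] b := fun i => TensorProduct.smul_tmul' _ _ _
    rw [addEnd_sum_apply]
    refine (Finset.sum_congr rfl fun i _ => (congrArg (α i • ·) (hxp i a b)).trans (this i)).trans ?_
    rw [← TensorProduct.sum_tmul, hA]
    exact TensorProduct.zero_tmul _ _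
  have hy : ∑ i : Fin (n + 1), β i • y ^ (i : ℕ) = 0 := by
    refine addEnd_tensor_ext _ _ fun a b => ?_
    have : ∀ i : Fin (n + 1), β i • (a ⊗ₜ[ℤ] (g ^ (i : ℕ) • b))
        = a ⊗ₜ[ℤ] (β i • g ^ (i : ℕ) • b) := fun i => (TensorProduct.tmul_smul _ _ _).symm
    rw [addEnd_sum_apply]
    refine (Finset.sum_congr rfl fun i _ => (congrArg (β i • ·) (hyp i a b)).trans (this i)).trans ?_
    rw [← TensorProduct.tmul_sum, hB]
    exact TensorProduct.tmul_zero _ _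
  obtain ⟨k, γ, hγ, h⟩ := exists_coeffs_mul x y hxy m n α β hα.1 hβ.1 hx hy
  refine ⟨k, γ, hγ ▸ (hα.mul hβ).pow k, fun t => ?_⟩
  have hd : ∀ i : ℕ, (diagTensorAction A B (g ^ i)).toAddMonoidHom = (x * y) ^ i := by
    intro i
    refine addEnd_tensor_ext _ _ fun a b => ?_
    rw [Commute.mul_pow hxy, addEnd_mul_apply, hyp, hxp]
    rfl
  have h2 := DFunLike.congr_fun h t
  rw [addEnd_sum_apply] at h2
  refine (Finset.sum_congr rfl fun i _ => ?_).trans h2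
  exact congrArg (γ i • ·) (DFunLike.congr_fun (hd i) t)
end

section
/- (Hilton) Let 1 → K → G → Q → 1 be a group extension (K a normal subgroup of G with quotient Q) and φ : K → L a group homomorphism. Suppose G acts on L by automorphisms so that: (i) k·l = φ(k) l φ(k)⁻¹ for all l ∈ L and k ∈ K; (ii) g·φ(k) = φ(g k g⁻¹) for all g ∈ G and k ∈ K. Let K† = { (φ(k), k⁻¹) : k ∈ K } ⊆ L ⋊ G. Then K† is a normal subgroup of the semidirect product L ⋊ G. Moreover, setting G* = (L ⋊ G)/K†, the map ψ : G → G* given by g ↦ (1, g)K† is a homomorphism satisfying ψ(k) = (φ(k), 1)K† for every k ∈ K, the map ι : L → G* given by l ↦ (l, 1)K† is an injective homomorphism whose image is normal in G*, and the composite G → G* → G*/ι(L) induces an isomorphism Q ≅ G*/ι(L). -/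
/-- **Proposition 5.9 (Hilton).** Let `1 → K → G → Q → 1` be a group extension, `φ : K → L`
a homomorphism, and let `G` act on `L` (via `a : G →* MulAut L`) so that
(i) `k · l = φ(k) l φ(k)⁻¹` for `k ∈ K`, `l ∈ L`, and (ii) `g · φ(k) = φ(g k g⁻¹)`.
Then `K† = {(φ(k), k⁻¹) : k ∈ K}` is a normal subgroup of `L ⋊ G`; moreover, setting
`G* = (L ⋊ G)/K†`, the map `ψ : g ↦ (1,g)K†` is a homomorphism with `ψ(k) = (φ(k),1)K†`
for `k ∈ K`, the map `ι : l ↦ (l,1)K†` is injective with normal image, and `ψ` induces an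
isomorphism `Q = G/K ≅ G*/ι(L)`. -/
theorem hilton_relative_extension (G L : Type*) [Group G] [Group L]
    (K : Subgroup G) (hK : K.Normal) (φ : ↥K →* L) (a : G →* MulAut L)
    (h1 : ∀ (k : ↥K) (l : L), a ↑k l = φ k * l * (φ k)⁻¹)
    (h2 : ∀ (g : G) (k : ↥K), a g (φ k) = φ ⟨g * ↑k * g⁻¹, hK.conj_mem ↑k k.2 g⟩) :
    ∃ Kd : Subgroup (L ⋊[a] G),
      (Kd : Set (L ⋊[a] G)) = {x | ∃ k : ↥K, x = ⟨φ k, (↑k)⁻¹⟩} ∧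
      ∃ _ : Kd.Normal,
        (∀ k : ↥K,
          (QuotientGroup.mk' Kd) ⟨1, ↑k⟩ = (QuotientGroup.mk' Kd) ⟨φ k, 1⟩) ∧
        Function.Injective ((QuotientGroup.mk' Kd).comp SemidirectProduct.inl) ∧
        ∃ _ : (((QuotientGroup.mk' Kd).comp SemidirectProduct.inl).range).Normal,
          ∃ e : (G ⧸ K) ≃*
              (((L ⋊[a] G) ⧸ Kd) ⧸ ((QuotientGroup.mk' Kd).comp SemidirectProduct.inl).range),
            ∀ g : G,
              e (QuotientGroup.mk g) =
                QuotientGroup.mk ((QuotientGroup.mk' Kd) (SemidirectProduct.inr g)) := by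
  have h3 : ∀ (k : ↥K) (l : L), a (↑k)⁻¹ l = (φ k)⁻¹ * l * φ k := by
    intro k l
    have := h1 k⁻¹ l
    simpa using this
  let Kd : Subgroup (L ⋊[a] G) :=
    { carrier := {x | ∃ k : ↥K, x = ⟨φ k, (↑k)⁻¹⟩}
      one_mem' := ⟨1, by ext <;> simp⟩
      mul_mem' := by
        rintro _ _ ⟨k, rfl⟩ ⟨m, rfl⟩
        refine ⟨m * k, ?_⟩
        ext
        · simp only [SemidirectProduct.mul_left, h3, map_mul]
          group
        · simp
      inv_mem' := by
        rintro _ ⟨k, rfl⟩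
        refine ⟨k⁻¹, ?_⟩
        ext
        · simp only [SemidirectProduct.inv_left, inv_inv, h1, map_inv]
          group
        · simp }
  have hmem : ∀ x, x ∈ Kd ↔ ∃ k : ↥K, x = ⟨φ k, (↑k)⁻¹⟩ := fun x => Iff.rfl
  have hN : Kd.Normal := by
    refine ⟨?_⟩
    rintro _ ⟨k, rfl⟩ x
    refine (hmem _).2 ⟨⟨x.right * ↑k * x.right⁻¹, hK.conj_mem ↑k k.2 x.right⟩, ?_⟩
    rw [mul_inv_eq_iff_eq_mul]
    ext
    · simp only [SemidirectProduct.mul_left, h2]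
      rw [h3 ⟨x.right * ↑k * x.right⁻¹, hK.conj_mem ↑k k.2 x.right⟩ x.left]
      group
    · simp only [SemidirectProduct.mul_right]
      group
  have hψ : ∀ k : ↥K,
      (QuotientGroup.mk' Kd) ⟨1, ↑k⟩ = (QuotientGroup.mk' Kd) ⟨φ k, 1⟩ := by
    intro k
    refine QuotientGroup.eq.2 ((hmem _).2 ⟨k, ?_⟩)
    ext
    · simp only [SemidirectProduct.mul_left, SemidirectProduct.inv_left,
        SemidirectProduct.inv_right, h3]
      group
    · simp
  have hdec : ∀ x : L ⋊[a] G, x = SemidirectProduct.inl x.left * SemidirectProduct.inr x.right :=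
    fun x => (SemidirectProduct.inl_left_mul_inr_right x).symm
  have hR : (((QuotientGroup.mk' Kd).comp
      (SemidirectProduct.inl : L →* L ⋊[a] G)).range).Normal := by
    rw [MonoidHom.range_comp]
    have : (SemidirectProduct.inl : L →* L ⋊[a] G).range.Normal := by
      rw [SemidirectProduct.range_inl_eq_ker_rightHom]
      infer_instance
    exact this.map _ (QuotientGroup.mk'_surjective Kd)
  refine ⟨Kd, rfl, hN, hψ, ?_, hR, ?_⟩
  · rw [injective_iff_map_eq_one]
    intro l hl
    obtain ⟨k, hk⟩ := (hmem _).1 ((QuotientGroup.eq_one_iff _).1 hl)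
    have hr := congrArg SemidirectProduct.right hk
    have hl := congrArg SemidirectProduct.left hk
    simp only [SemidirectProduct.right_inl, SemidirectProduct.left_inl] at hr hl
    have : k = 1 := by
      ext
      simpa using hr.symm
    rw [hl, this, map_one]
  · let f : G →* (((L ⋊[a] G) ⧸ Kd) ⧸
        ((QuotientGroup.mk' Kd).comp (SemidirectProduct.inl : L →* L ⋊[a] G)).range) :=
      (QuotientGroup.mk' _).comp ((QuotientGroup.mk' Kd).comp SemidirectProduct.inr)
    have hf : Function.Surjective f := by
      intro y
      obtain ⟨y, rfl⟩ := QuotientGroup.mk'_surjective _ y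
      obtain ⟨x, rfl⟩ := QuotientGroup.mk'_surjective _ y
      refine ⟨x.right, ?_⟩
      conv_rhs => rw [hdec x, map_mul, map_mul]
      refine (mul_eq_right.2 ?_).symm
      exact (QuotientGroup.eq_one_iff _).2 ⟨x.left, rfl⟩
    have hker : K = f.ker := by
      ext g
      rw [MonoidHom.mem_ker]
      constructor
      · intro hg
        exact (QuotientGroup.eq_one_iff _).2 ⟨φ ⟨g, hg⟩, (hψ ⟨g, hg⟩).symm⟩
      · intro hg
        obtain ⟨l, hl⟩ := (QuotientGroup.eq_one_iff _).1 hg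
        obtain ⟨k, hk⟩ := (hmem _).1 (QuotientGroup.eq.1 hl)
        have hr := congrArg SemidirectProduct.right hk
        simp at hr
        rw [hr]
        exact K.inv_mem k.2
    exact ⟨(QuotientGroup.quotientMulEquivOfEq hker).trans
      (QuotientGroup.quotientKerEquivOfSurjective f hf), fun g => rfl⟩
end
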